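/- Let n ≥ 1 and let Γ : ℝⁿ × ℝⁿ → (0, ∞) be twice continuously differentiable and satisfy the multivariate permutation functional equation Γ(x, X) · Γ(x′, X − x) = Γ(x′, X) · Γ(x, X − x′) for all x, x′, X ∈ ℝⁿ. Then there exist continuously differentiable functions f : ℝⁿ → ℝ and h : ℝⁿ → ℝ such that Γ(x, X) = exp(f(X − x) − f(X) + h(x)) for all x, X ∈ ℝⁿ. -/

import Mathlib

/-!
Set `g = log Γ` and let `A X` be the derivative of `x ↦ g (x, X)` at `x = 0`. Differentiating the
logarithmic equation `g (x, X) + g (y, X - x) = g (y, X) + g (x, X - y)` in `y` at `y = 0` shows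
that `∂_X g (x, X) = A X - A (X - x)`. The mixed second derivative of `g` at `(0, X)` is therefore
`A'(X)`, so Schwarz's theorem says that the 1-form `A` is closed, and the Poincaré lemma gives
`A = dφ`. Then `g (x, X) - φ X + φ (X - x)` does not depend on `X`; it is `h x`, with `f = -φ`.
-/

section MixedPartials

variable {𝕜 E F G : Type*} [NontriviallyNormedField 𝕜] [NormedAddCommGroup E] [NormedSpace 𝕜 E]
  [NormedAddCommGroup F] [NormedSpace 𝕜 F] [NormedAddCommGroup G] [NormedSpace 𝕜 G]
  {g : E × F → G} {x : E} {y : F}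

theorem fderiv_prodMk_left (hg : DifferentiableAt 𝕜 g (x, y)) :
    fderiv 𝕜 (fun x' => g (x', y)) x = fderiv 𝕜 g (x, y) ∘L .inl 𝕜 E F :=
  (hg.hasFDerivAt.comp x (hasFDerivAt_prodMk_left x y)).fderiv

theorem fderiv_prodMk_right (hg : DifferentiableAt 𝕜 g (x, y)) :
    fderiv 𝕜 (fun y' => g (x, y')) y = fderiv 𝕜 g (x, y) ∘L .inr 𝕜 E F :=
  (hg.hasFDerivAt.comp y (hasFDerivAt_prodMk_right x y)).fderiv

theorem fderiv_fderiv_prodMk_comm {n : WithTop ℕ∞} (hg : ContDiff 𝕜 n g)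
    (hn : minSmoothness 𝕜 2 ≤ n) (x : E) (y : F) (u : E) (v : F) :
    fderiv 𝕜 (fun x' => fderiv 𝕜 (fun y' => g (x', y')) y) x u v =
      fderiv 𝕜 (fun y' => fderiv 𝕜 (fun x' => g (x', y')) x) y v u := by
  have hg₂ : ContDiff 𝕜 2 g := hg.of_le (le_minSmoothness.trans hn)
  have hd : Differentiable 𝕜 g := hg₂.differentiable two_ne_zero
  have hd' : Differentiable 𝕜 (fderiv 𝕜 g) :=
    (hg₂.fderiv_right one_add_one_eq_two.le).differentiable one_ne_zero
  have hx : DifferentiableAt 𝕜 (fun x' => fderiv 𝕜 g (x', y)) x := by fun_prop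
  have hy : DifferentiableAt 𝕜 (fun y' => fderiv 𝕜 g (x, y')) y := by fun_prop
  simp only [fderiv_prodMk_left (hd _), fderiv_prodMk_right (hd _)]
  rw [fderiv_clm_comp hx (differentiableAt_const _), fderiv_clm_comp hy (differentiableAt_const _),
    fderiv_prodMk_left (hd' _), fderiv_prodMk_right (hd' _)]
  simpa using hg.contDiffAt.isSymmSndFDerivAt hn (u, 0) (0, v)

end MixedPartials

/-- The permutation functional equation in logarithmic form, for `g = log Γ`: the total weight of
two consecutive emissions `x`, `y` from the state `X` does not depend on their order. -/
def IsPermutable {E F : Type*} [Sub E] [Add F] (g : E × E → F) : Prop :=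
  ∀ x y X : E, g (x, X) + g (y, X - x) = g (y, X) + g (x, X - y)

theorem IsPermutable.log {E : Type*} [Sub E] {Γ : E × E → ℝ} (hΓ : ∀ p, 0 < Γ p)
    (h : ∀ x y X : E, Γ (x, X) * Γ (y, X - x) = Γ (y, X) * Γ (x, X - y)) :
    IsPermutable fun p => Real.log (Γ p) := fun x y X => by
  simp only [← Real.log_mul (hΓ _).ne' (hΓ _).ne', h x y X]

section Permutation

variable {E F : Type*} [NormedAddCommGroup E] [NormedSpace ℝ E] [NormedAddCommGroup F]
  [NormedSpace ℝ F] {g : E × E → F}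

/-- The 1-form on the state space given by the first-order weight `∂_x g (0, X)` of an
infinitesimal emission from the state `X`. -/
noncomputable def emissionForm (g : E × E → F) (X : E) : E →L[ℝ] F :=
  fderiv ℝ (fun x => g (x, X)) 0

theorem contDiff_emissionForm {m : WithTop ℕ∞} (hg : ContDiff ℝ (m + 1) g) :
    ContDiff ℝ m (emissionForm g) :=
  ContDiff.fderiv (f := fun X x => g (x, X)) (hg.comp (contDiff_snd.prodMk contDiff_fst))
    contDiff_const le_rfl

theorem differentiable_emissionForm (hg : ContDiff ℝ 2 g) : Differentiable ℝ (emissionForm g) :=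
  (contDiff_emissionForm (m := 1) (hg.of_le one_add_one_eq_two.le)).differentiable one_ne_zero

theorem IsPermutable.hasFDerivAt_right (hperm : IsPermutable g)
    (hg : ∀ X, DifferentiableAt ℝ (fun x => g (x, X)) 0) (x X : E) :
    HasFDerivAt (fun Y => g (x, Y)) (emissionForm g X - emissionForm g (X - x)) X := by
  have hshift : HasFDerivAt (fun y => g (x, X) + g (y, X - x) - g (y, X))
      (emissionForm g (X - x) - emissionForm g X) (X - X) := by
    rw [sub_self]
    exact ((hg (X - x)).hasFDerivAt.const_add _).sub (hg X).hasFDerivAt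
  have hcomp := hshift.comp X ((hasFDerivAt_id X).const_sub X)
  convert! hcomp using 1
  · ext Y
    simp [hperm x (X - Y) X]
  · ext v
    simp

theorem IsPermutable.fderiv_emissionForm_symmetric (hperm : IsPermutable g)
    (hg : ContDiff ℝ 2 g) (X u v : E) :
    fderiv ℝ (emissionForm g) X u v = fderiv ℝ (emissionForm g) X v u := by
  have hd : Differentiable ℝ g := hg.differentiable two_ne_zero
  have hright (x : E) :
      fderiv ℝ (fun Y => g (x, Y)) X = emissionForm g X - emissionForm g (X - x) :=
    (hperm.hasFDerivAt_right (fun Y => by fun_prop) x X).fderiv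
  have hmixed : fderiv ℝ (fun x => fderiv ℝ (fun Y => g (x, Y)) X) 0 =
      fderiv ℝ (emissionForm g) X := by
    have hreflect : HasFDerivAt (fun x => emissionForm g (X - x))
        (-fderiv ℝ (emissionForm g) X) 0 := by
      have hd' := (differentiable_emissionForm hg (X - 0)).hasFDerivAt
      simpa [Function.comp_def] using hd'.comp 0 ((hasFDerivAt_id 0).const_sub X)
    simp only [hright, fderiv_const_sub, hreflect.fderiv, neg_neg]
  calc fderiv ℝ (emissionForm g) X u v
      = fderiv ℝ (fun x => fderiv ℝ (fun Y => g (x, Y)) X) 0 u v := by rw [hmixed]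
    _ = fderiv ℝ (emissionForm g) X v u := fderiv_fderiv_prodMk_comm hg (by simp) 0 X u v

theorem IsPermutable.exists_hasFDerivAt_emissionForm [CompleteSpace F] (hperm : IsPermutable g)
    (hg : ContDiff ℝ 2 g) : ∃ φ : E → F, ∀ X, HasFDerivAt φ (emissionForm g X) X := by
  obtain ⟨φ, hφ⟩ := convex_univ.exists_forall_hasFDerivAt_of_fderiv_symmetric isOpen_univ
    (differentiable_emissionForm hg).differentiableOn
    fun X _ => hperm.fderiv_emissionForm_symmetric hg X
  exact ⟨φ, fun X => hφ X (Set.mem_univ X)⟩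

theorem IsPermutable.eq_of_hasFDerivAt_emissionForm (hperm : IsPermutable g)
    (hg : ∀ X, DifferentiableAt ℝ (fun x => g (x, X)) 0) {φ : E → F}
    (hφ : ∀ X, HasFDerivAt φ (emissionForm g X) X) (x X : E) :
    g (x, X) = φ X - φ (X - x) + (g (x, 0) - φ 0 + φ (-x)) := by
  have hderiv (Y : E) : HasFDerivAt (fun Y => g (x, Y) - (φ Y - φ (Y - x))) (0 : E →L[ℝ] F) Y := by
    simpa using (hperm.hasFDerivAt_right hg x Y).fun_sub
      ((hφ Y).fun_sub ((hasFDerivAt_comp_sub x).2 (hφ (Y - x))))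
  have hconst : g (x, X) - (φ X - φ (X - x)) = g (x, 0) - (φ 0 - φ (0 - x)) :=
    is_const_of_fderiv_eq_zero (fun Y => (hderiv Y).differentiableAt) (fun Y => (hderiv Y).fderiv)
      X 0
  rw [zero_sub, ← sub_add (g (x, 0))] at hconst
  exact sub_eq_iff_eq_add'.1 hconst

theorem IsPermutable.exists_contDiff_decomposition [CompleteSpace F] {m : ℕ∞} (hm : 1 ≤ m)
    (hperm : IsPermutable g) (hg : ContDiff ℝ (m + 1) g) :
    ∃ f h : E → F, ContDiff ℝ (m + 1) f ∧ ContDiff ℝ (m + 1) h ∧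
      ∀ x X, g (x, X) = f (X - x) - f X + h x := by
  have hg₂ : ContDiff ℝ 2 g := hg.of_le <| by
    rw [← one_add_one_eq_two]
    gcongr
    exact_mod_cast hm
  have hd : Differentiable ℝ g := hg₂.differentiable two_ne_zero
  obtain ⟨φ, hφ⟩ := hperm.exists_hasFDerivAt_emissionForm hg₂
  have hφ' : fderiv ℝ φ = emissionForm g := funext fun X => (hφ X).fderiv
  have hφC : ContDiff ℝ (m + 1) φ := contDiff_succ_iff_fderiv.2
    ⟨fun X => (hφ X).differentiableAt, by simp, hφ' ▸ contDiff_emissionForm hg⟩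
  refine ⟨fun X => -φ X, fun x => g (x, 0) - φ 0 + φ (-x), hφC.neg, by fun_prop, fun x X => ?_⟩
  rw [neg_sub_neg]
  exact hperm.eq_of_hasFDerivAt_emissionForm (fun Y => by fun_prop) hφ x X

end Permutation

theorem multivariate_tunneling_functional_equation_solution_general
    {E : Type*} [NormedAddCommGroup E] [NormedSpace ℝ E] {m : ℕ∞} (hm : 1 ≤ m)
    (Γ : E × E → ℝ) (hpos : ∀ p, 0 < Γ p) (hsmooth : ContDiff ℝ (m + 1) Γ)
    (hfe : ∀ x x' X : E, Γ (x, X) * Γ (x', X - x) = Γ (x', X) * Γ (x, X - x')) :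
    ∃ f h : E → ℝ, ContDiff ℝ (m + 1) f ∧ ContDiff ℝ (m + 1) h ∧
      ∀ x X : E, Γ (x, X) = Real.exp (f (X - x) - f X + h x) := by
  obtain ⟨f, h, hf, hh, hlog⟩ := (IsPermutable.log hpos hfe).exists_contDiff_decomposition hm
    (hsmooth.log fun p => (hpos p).ne')
  exact ⟨f, h, hf, hh, fun x X => by rw [← hlog, Real.exp_log (hpos _)]⟩

/-- **Theorem 3 (multivariate case).**
Let `n ≥ 1` and let `Γ : ℝⁿ × ℝⁿ → (0, ∞)` be twice continuously
differentiable and satisfy the multivariate permutation functional equation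
`Γ(x, X) · Γ(x′, X − x) = Γ(x′, X) · Γ(x, X − x′)`.  Then
`Γ(x, X) = exp (f (X − x) − f X + h x)` for some continuously differentiable
`f, h : ℝⁿ → ℝ`. -/
theorem multivariate_tunneling_functional_equation_solution
    (n : ℕ) (hn : 1 ≤ n)
    (Γ : (Fin n → ℝ) × (Fin n → ℝ) → ℝ)
    (hpos : ∀ p, 0 < Γ p)
    (hsmooth : ContDiff ℝ 2 Γ)
    (hfe : ∀ x x' X : Fin n → ℝ,
      Γ (x, X) * Γ (x', X - x) = Γ (x', X) * Γ (x, X - x')) :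
    ∃ f h : (Fin n → ℝ) → ℝ, ContDiff ℝ 1 f ∧ ContDiff ℝ 1 h ∧
      ∀ x X : Fin n → ℝ, Γ (x, X) = Real.exp (f (X - x) - f X + h x) := by
  obtain ⟨f, h, hf, hh, hΓ⟩ := multivariate_tunneling_functional_equation_solution_general le_rfl Γ
    hpos (hsmooth.of_le one_add_one_eq_two.le) hfe
  exact ⟨f, h, hf.of_le le_self_add, hh.of_le le_self_add, hΓ⟩
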